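/- Let λ > 0 and h̃ > 0. Then the equation h̃ = (x/2)·e^{λx²/4} has a unique positive solution b_λ, and the pair (U_λ, b_λ) with U_λ(η) = h̃·∫_η^{b_λ} e^{−λs²/4} ds solves the perturbed stationary problem: U_λ''(η) + (λη/2)·U_λ'(η) = 0 for 0 < η < b_λ; −U_λ'(0) = h̃; U_λ(b_λ) = 0; and b_λ/2 = −U_λ'(b_λ). -/

import Mathlib

/-- For `λ > 0` and `h̃ > 0`, the equation `h̃ = (x/2) exp (λ x²/4)` has a unique
positive solution `b_λ`, and the pair `(U_λ, b_λ)` with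
`U_λ η = h̃ ∫_η^{b_λ} exp (-λ s²/4) ds` solves the perturbed stationary
problem (2.6). -/
theorem perturbed_stationary_problem
    (lam htil : ℝ) (hlam : 0 < lam) (hhtil : 0 < htil) :
    (∃! b : ℝ, 0 < b ∧ htil = b / 2 * Real.exp (lam * b ^ 2 / 4)) ∧
    (∀ b : ℝ, 0 < b → htil = b / 2 * Real.exp (lam * b ^ 2 / 4) →
      ∀ U : ℝ → ℝ, (∀ η, U η = htil * ∫ s in η..b, Real.exp (-(lam * s ^ 2) / 4)) →
        (∀ η ∈ Set.Ioo 0 b, deriv (deriv U) η + lam * η / 2 * deriv U η = 0) ∧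
        (-deriv U 0 = htil) ∧ (U b = 0) ∧ (b / 2 = -deriv U b)) := by
  have mono : ∀ x y : ℝ, 0 < x → x < y →
      x / 2 * Real.exp (lam * x ^ 2 / 4) < y / 2 * Real.exp (lam * y ^ 2 / 4) := by
    intro x y hx hxy
    have h1 : Real.exp (lam * x ^ 2 / 4) ≤ Real.exp (lam * y ^ 2 / 4) := by
      apply Real.exp_le_exp.mpr
      have : x ^ 2 ≤ y ^ 2 := by nlinarith
      have := mul_le_mul_of_nonneg_left this hlam.le
      linarith
    have h2 := Real.exp_pos (lam * y ^ 2 / 4)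
    have h3 := mul_le_mul_of_nonneg_left h1 (by linarith : (0:ℝ) ≤ x / 2)
    have h4 := mul_lt_mul_of_pos_right (by linarith : x / 2 < y / 2) h2
    linarith
  refine ⟨?_, ?_⟩
  · have hc : ContinuousOn (fun x : ℝ => x / 2 * Real.exp (lam * x ^ 2 / 4))
        (Set.Icc 0 (2 * htil)) := by fun_prop
    have hiv := intermediate_value_Icc (by linarith : (0:ℝ) ≤ 2 * htil) hc
    have hm : htil ∈ Set.Icc ((0:ℝ) / 2 * Real.exp (lam * 0 ^ 2 / 4))
        (2 * htil / 2 * Real.exp (lam * (2 * htil) ^ 2 / 4)) := by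
      refine ⟨by simpa using hhtil.le, ?_⟩
      have h1 : 1 ≤ Real.exp (lam * (2 * htil) ^ 2 / 4) :=
        Real.one_le_exp (by positivity)
      nlinarith
    obtain ⟨b, hb, hbe⟩ := hiv hm
    have hbe : b / 2 * Real.exp (lam * b ^ 2 / 4) = htil := hbe
    have hb0 : 0 < b := by
      rcases hb.1.lt_or_eq with h | h
      · exact h
      · subst h
        simp at hbe
        linarith
    refine ⟨b, ⟨hb0, hbe.symm⟩, ?_⟩
    rintro y ⟨hy, hye⟩
    rcases lt_trichotomy y b with h | h | h
    · have := mono y b hy h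
      linarith
    · exact h
    · have := mono b y hb0 h
      linarith
  · intro b hb hbe U hU
    have hcont : Continuous (fun s : ℝ => Real.exp (-(lam * s ^ 2) / 4)) := by fun_prop
    have hd : ∀ η, HasDerivAt U (-(htil * Real.exp (-(lam * η ^ 2) / 4))) η := by
      intro η
      have h := (intervalIntegral.integral_hasDerivAt_left
        (hcont.intervalIntegrable η b)
        (hcont.stronglyMeasurableAtFilter _ _) hcont.continuousAt).const_mul htil
      have hU' : U = fun η => htil * ∫ s in η..b, Real.exp (-(lam * s ^ 2) / 4) := funext hU
      rw [hU']
      exact h.congr_deriv (by ring)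
    have hdU : deriv U = fun η => -(htil * Real.exp (-(lam * η ^ 2) / 4)) :=
      funext fun η => (hd η).deriv
    refine ⟨?_, ?_, ?_, ?_⟩
    · intro η _
      have h2 : HasDerivAt (fun η : ℝ => -(htil * Real.exp (-(lam * η ^ 2) / 4)))
          (-(htil * (Real.exp (-(lam * η ^ 2) / 4) * (-(lam * (2 * η)) / 4)))) η := by
        have h0 : HasDerivAt (fun η : ℝ => η ^ 2) (2 * η) η := by
          simpa using hasDerivAt_pow 2 η
        exact ((((h0.const_mul lam).neg).div_const 4).exp.const_mul htil).neg
      rw [hdU, h2.deriv]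
      ring
    · rw [hdU]
      simp
    · rw [hU]
      simp
    · rw [hdU]
      have h : Real.exp (lam * b ^ 2 / 4) * Real.exp (-(lam * b ^ 2) / 4) = 1 := by
        rw [← Real.exp_add, ← Real.exp_zero]
        congr 1
        ring
      simp only [neg_neg]
      calc b / 2 = b / 2 * (Real.exp (lam * b ^ 2 / 4) * Real.exp (-(lam * b ^ 2) / 4)) := by
            rw [h, mul_one]
        _ = (b / 2 * Real.exp (lam * b ^ 2 / 4)) * Real.exp (-(lam * b ^ 2) / 4) := by ring
        _ = _ := by rw [← hbe]
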